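/- arXiv:1901.09578 — 2 statements merged into one kernel-verified Lean document; each statement's English description precedes it below -/
import Mathlib

section
/- Let p_σ ∈ [0,1] be given for each σ ∈ ∂Δ_n and define p'_σ = 1 − p_{σ̂}. Then for every simplicial complex Y ⊆ ∂Δ_n one has P̄_n(c(Y)) = P̲'_n(Y) and P̲_n(c(Y)) = P̄'_n(Y), where P̄_n, P̲_n are the upper and lower measures with parameters p_σ and P̄'_n, P̲'_n are the upper and lower measures with parameters p'_σ. -/
/-!
Duality `c` is an involution on hypergraphs in `∂Δₙ`. It exchanges the two closure operators: the
dual of `X̄` is the largest complex contained in `c(X)`, because `σ ⊆ τ` if and only if `τ̂ ⊆ σ̂`.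
Since `σ` is absent from `X` exactly when `σ̂` is present in `c(X)`, duality carries the Bernoulli
measure with parameters `p` to the one with parameters `p'`. Reindexing the sum over hypergraphs
along `c` gives the first identity; the second is the first one for `p'` and `c(Y)`, because
`p'' = p` and `c(c(Y)) = Y`.
-/

open Finset

/-- The full simplex `Δₙ`: all nonempty subsets of `[n] = {0,…,n}`. -/
def simplexAll (n : ℕ) : Finset (Finset (Fin (n+1))) :=
  Finset.univ.filter fun σ => σ.Nonempty

/-- The boundary `∂Δₙ`: all nonempty proper subsets of `[n]`. -/
def bdry (n : ℕ) : Finset (Finset (Fin (n+1))) :=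
  Finset.univ.filter fun σ => σ.Nonempty ∧ σ ≠ Finset.univ

/-- A hypergraph is a simplicial complex if it is closed under passing to
nonempty subsets. -/
def IsComplex {n : ℕ} (X : Finset (Finset (Fin (n+1)))) : Prop :=
  ∀ σ ∈ X, ∀ τ : Finset (Fin (n+1)), τ ⊆ σ → τ.Nonempty → τ ∈ X

instance {n : ℕ} (X : Finset (Finset (Fin (n+1)))) : Decidable (IsComplex X) :=
  inferInstanceAs (Decidable (∀ σ ∈ X, ∀ τ : Finset (Fin (n+1)), τ ⊆ σ → τ.Nonempty → τ ∈ X))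

/-- The dual hypergraph `c(X) = {σ̂ : σ ∈ ∂Δₙ, σ ∉ X}`, where `σ̂ = [n] \ σ`. -/
def dual {n : ℕ} (X : Finset (Finset (Fin (n+1)))) : Finset (Finset (Fin (n+1))) :=
  (bdry n \ X).image fun σ => σᶜ

/-- `X̄`: the smallest simplicial complex containing the hypergraph `X`. -/
def clUp {n : ℕ} (X : Finset (Finset (Fin (n+1)))) : Finset (Finset (Fin (n+1))) :=
  Finset.univ.filter fun τ => τ.Nonempty ∧ ∃ σ ∈ X, τ ⊆ σ

/-- `X̲`: the largest simplicial complex contained in the hypergraph `X`. -/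
def clLow {n : ℕ} (X : Finset (Finset (Fin (n+1)))) : Finset (Finset (Fin (n+1))) :=
  Finset.univ.filter fun τ => τ.Nonempty ∧ ∀ σ : Finset (Fin (n+1)), σ ⊆ τ → σ.Nonempty → σ ∈ X

/-- The Bernoulli measure with parameters `p` on hypergraphs contained in the
ambient set `S` of simplices: `P(X) = ∏_{σ∈X} p σ · ∏_{σ∈S\X} (1 - p σ)`. -/
def bern {n : ℕ} (S : Finset (Finset (Fin (n+1)))) (p : Finset (Fin (n+1)) → ℝ)
    (X : Finset (Finset (Fin (n+1)))) : ℝ :=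
  (∏ σ ∈ X, p σ) * ∏ σ ∈ S \ X, (1 - p σ)

/-- The upper measure: `P̄(Y) = Σ_{X ⊆ S, X̄ = Y} P(X)`. -/
def upperP {n : ℕ} (S : Finset (Finset (Fin (n+1)))) (p : Finset (Fin (n+1)) → ℝ)
    (Y : Finset (Finset (Fin (n+1)))) : ℝ :=
  ∑ X ∈ S.powerset.filter (fun X => clUp X = Y), bern S p X

/-- The lower measure: `P̲(Y) = Σ_{X ⊆ S, X̲ = Y} P(X)`. -/
def lowerP {n : ℕ} (S : Finset (Finset (Fin (n+1)))) (p : Finset (Fin (n+1)) → ℝ)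
    (Y : Finset (Finset (Fin (n+1)))) : ℝ :=
  ∑ X ∈ S.powerset.filter (fun X => clLow X = Y), bern S p X

/-- External simplices of `Y` relative to the ambient set `S`: simplices
`σ ∈ S` with `σ ∉ Y` but every nonempty proper subset of `σ` in `Y`. -/
def extSimp {n : ℕ} (S Y : Finset (Finset (Fin (n+1)))) : Finset (Finset (Fin (n+1))) :=
  S.filter fun σ => σ ∉ Y ∧ ∀ τ : Finset (Fin (n+1)), τ ⊂ σ → τ.Nonempty → τ ∈ Y

/-- Maximal simplices of `Y`: simplices of `Y` not properly contained in another
simplex of `Y`. -/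
def maxSimp {n : ℕ} (Y : Finset (Finset (Fin (n+1)))) : Finset (Finset (Fin (n+1))) :=
  Y.filter fun σ => ∀ τ ∈ Y, σ ⊆ τ → σ = τ

section

open scoped FinsetFamily

theorem prod_compls {α M : Type*} [BooleanAlgebra α] [CommMonoid M] (s : Finset α) (f : α → M) :
    ∏ a ∈ sᶜˢ, f a = ∏ a ∈ s, f aᶜ :=
  prod_map _ _ _

variable {n : ℕ} {X Y : Finset (Finset (Fin (n + 1)))} {σ τ : Finset (Fin (n + 1))}

theorem mem_bdry : σ ∈ bdry n ↔ σ.Nonempty ∧ σ ≠ univ := by simp [bdry]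

theorem nonempty_of_mem_bdry (hσ : σ ∈ bdry n) : σ.Nonempty := (mem_bdry.1 hσ).1

theorem compl_mem_bdry : σᶜ ∈ bdry n ↔ σ ∈ bdry n := by
  simp only [mem_bdry, nonempty_iff_ne_empty, ne_eq, compl_eq_empty_iff, compl_eq_univ_iff,
    and_comm]

theorem isComplex_bdry : IsComplex (bdry n) := by
  intro σ hσ τ hτσ hτ
  refine mem_bdry.2 ⟨hτ, ?_⟩
  rintro rfl
  exact (mem_bdry.1 hσ).2 (univ_subset_iff.1 hτσ)

theorem mem_clUp : τ ∈ clUp X ↔ τ.Nonempty ∧ ∃ σ ∈ X, τ ⊆ σ := by simp [clUp]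

theorem mem_clLow : τ ∈ clLow X ↔ τ.Nonempty ∧ ∀ σ ⊆ τ, σ.Nonempty → σ ∈ X := by simp [clLow]

theorem clUp_subset (hY : IsComplex Y) (hXY : X ⊆ Y) : clUp X ⊆ Y := by
  intro τ hτ
  obtain ⟨hne, σ, hσ, hτσ⟩ := mem_clUp.1 hτ
  exact hY σ (hXY hσ) τ hτσ hne

theorem dual_eq_compls : dual X = (bdry n \ X)ᶜˢ := image_compl _

theorem mem_dual : σ ∈ dual X ↔ σ ∈ bdry n ∧ σᶜ ∉ X := by
  rw [dual_eq_compls, mem_compls, mem_sdiff, compl_mem_bdry]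

theorem dual_subset_bdry : dual X ⊆ bdry n := fun _ hσ => (mem_dual.1 hσ).1

theorem bdry_sdiff_dual (hX : X ⊆ bdry n) : bdry n \ dual X = Xᶜˢ := by
  ext σ
  have hσ : σᶜ ∈ X → σ ∈ bdry n := fun h => compl_mem_bdry.1 (hX h)
  rw [mem_sdiff, mem_dual, mem_compls]
  tauto

theorem dual_dual (hX : X ⊆ bdry n) : dual (dual X) = X := by
  rw [dual_eq_compls, bdry_sdiff_dual hX, compls_compls]

theorem dual_eq_iff_eq_dual (hX : X ⊆ bdry n) (hY : Y ⊆ bdry n) :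
    dual X = Y ↔ X = dual Y :=
  ⟨fun h => by rw [← h, dual_dual hX], fun h => by rw [h, dual_dual hY]⟩

theorem dual_clUp (hX : X ⊆ bdry n) : dual (clUp X) = clLow (dual X) := by
  ext τ
  rw [mem_dual, mem_clUp, mem_clLow]
  constructor
  · rintro ⟨hτ, hτX⟩
    refine ⟨nonempty_of_mem_bdry hτ, fun σ hστ hσ => mem_dual.2 ⟨?_, fun hσX => hτX ?_⟩⟩
    · exact isComplex_bdry τ hτ σ hστ hσ
    · exact ⟨nonempty_of_mem_bdry (compl_mem_bdry.2 hτ), σᶜ, hσX, compl_subset_compl.2 hστ⟩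
  · rintro ⟨hτ, hfaces⟩
    refine ⟨dual_subset_bdry (hfaces τ Subset.rfl hτ), ?_⟩
    rintro ⟨-, σ, hσ, hτσ⟩
    have hσ' : σᶜ ∈ dual X :=
      hfaces σᶜ (compl_le_iff_compl_le.1 hτσ) (nonempty_of_mem_bdry (compl_mem_bdry.2 (hX hσ)))
    exact (mem_dual.1 hσ').2 (by rwa [compl_compl])

theorem clLow_dual_eq_iff (hX : X ⊆ bdry n) (hY : Y ⊆ bdry n) :
    clLow (dual X) = Y ↔ clUp X = dual Y := by
  rw [← dual_clUp hX, dual_eq_iff_eq_dual (clUp_subset isComplex_bdry hX) hY]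

theorem bern_dual (p : Finset (Fin (n + 1)) → ℝ) (hX : X ⊆ bdry n) :
    bern (bdry n) (fun σ => 1 - p σᶜ) (dual X) = bern (bdry n) p X := by
  rw [bern, bdry_sdiff_dual hX, dual_eq_compls, prod_compls, prod_compls]
  simp only [compl_compl, sub_sub_cancel]
  exact mul_comm _ _

theorem upperP_dual (p : Finset (Fin (n + 1)) → ℝ) (hY : Y ⊆ bdry n) :
    upperP (bdry n) p (dual Y) = lowerP (bdry n) (fun σ => 1 - p σᶜ) Y := by
  refine sum_nbij' dual dual ?_ ?_ ?_ ?_ ?_ <;> simp only [mem_filter, mem_powerset, and_imp]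
  · exact fun X hX hXY => ⟨dual_subset_bdry, (clLow_dual_eq_iff hX hY).2 hXY⟩
  · intro X hX hXY
    refine ⟨dual_subset_bdry, (clLow_dual_eq_iff dual_subset_bdry hY).1 ?_⟩
    rwa [dual_dual hX]
  · exact fun X hX _ => dual_dual hX
  · exact fun X hX _ => dual_dual hX
  · exact fun X hX _ => (bern_dual p hX).symm

theorem lowerP_dual (p : Finset (Fin (n + 1)) → ℝ) (hY : Y ⊆ bdry n) :
    lowerP (bdry n) p (dual Y) = upperP (bdry n) (fun σ => 1 - p σᶜ) Y := by
  have h := upperP_dual (fun σ => 1 - p σᶜ) (dual_subset_bdry (X := Y))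
  simpa only [dual_dual hY, compl_compl, sub_sub_cancel] using h.symm

theorem measures_dual_general (p : Finset (Fin (n + 1)) → ℝ) (hY : Y ⊆ bdry n) :
    upperP (bdry n) p (dual Y) = lowerP (bdry n) (fun σ => 1 - p σᶜ) Y ∧
    lowerP (bdry n) p (dual Y) = upperP (bdry n) (fun σ => 1 - p σᶜ) Y :=
  ⟨upperP_dual p hY, lowerP_dual p hY⟩

end

/-- Proposition 4.3(2): with dual parameters `p'_σ = 1 - p_{σ̂}`, for every
simplicial complex `Y ⊆ ∂Δₙ` one has `P̄ₙ(c(Y)) = P̲'ₙ(Y)` and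
`P̲ₙ(c(Y)) = P̄'ₙ(Y)`. -/
theorem measures_dual (n : ℕ) (hn : 1 ≤ n) (p : Finset (Fin (n+1)) → ℝ)
    (hp : ∀ σ ∈ bdry n, 0 ≤ p σ ∧ p σ ≤ 1)
    (Y : Finset (Finset (Fin (n+1)))) (hY : Y ⊆ bdry n) (hYc : IsComplex Y) :
    upperP (bdry n) p (dual Y) = lowerP (bdry n) (fun σ => 1 - p σᶜ) Y ∧
    lowerP (bdry n) p (dual Y) = upperP (bdry n) (fun σ => 1 - p σᶜ) Y :=
  measures_dual_general p hY
end

section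
/- Let Y and Y' be independent random simplicial complexes in Δ_n, where Y is distributed by the upper measure with parameters p_σ (so q_σ = 1 − p_σ) and Y' by the upper measure with parameters p'_σ (q'_σ = 1 − p'_σ). Then the union Y ∪ Y' is distributed by the upper measure with parameters q_σ · q'_σ in place of the q's, i.e. with probability parameters σ ↦ p_σ + p'_σ − p_σ·p'_σ. Equivalently, the pushforward of the product measure P̄_n × P̄'_n under (Y, Y') ↦ Y ∪ Y' is the upper measure with parameters p_σ + p'_σ − p_σ p'_σ. -/
/-!
Draw hypergraphs `X` and `X'` independently from the Bernoulli measures, so that `Y = X̄` and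
`Y' = X̄'`. A simplex `σ` is missing from `X ∪ X'` exactly when it is missing from both, which
happens with probability `q σ * q' σ`, independently for different `σ`; hence `X ∪ X'` is again
Bernoulli. As closure commutes with unions, `Y ∪ Y'` is the closure of `X ∪ X'`.
-/

open Finset

section BernoulliWeight

variable {α R : Type*} [DecidableEq α] [CommRing R]

/-- The weight `∏_{a ∈ X} p a · ∏_{a ∈ S \ X} (1 - p a)` of `X ⊆ S` under the Bernoulli measure on
subsets of `S`. It extends `bern` to arbitrary ground types and commutative rings, so that one can
induct on `S`. -/
def bernoulliWeight (S : Finset α) (p : α → R) (X : Finset α) : R :=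
  (∏ a ∈ X, p a) * ∏ a ∈ S \ X, (1 - p a)

variable {S X : Finset α} {a : α}

theorem bernoulliWeight_insert_of_notMem (p : α → R) (haS : a ∉ S) (haX : a ∉ X) :
    bernoulliWeight (insert a S) p X = (1 - p a) * bernoulliWeight S p X := by
  have ha : a ∉ S \ X := fun h => haS (mem_sdiff.1 h).1
  rw [bernoulliWeight, insert_sdiff_of_notMem _ haX, prod_insert ha, bernoulliWeight]
  ring

theorem bernoulliWeight_insert_insert (p : α → R) (haS : a ∉ S) (haX : a ∉ X) :
    bernoulliWeight (insert a S) p (insert a X) = p a * bernoulliWeight S p X := by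
  rw [bernoulliWeight, insert_sdiff_insert, sdiff_insert_of_notMem haS, prod_insert haX,
    bernoulliWeight, mul_assoc]

theorem sum_bernoulliWeight_insert_mul (p : α → R) (ha : a ∉ S) (f : Finset α → R) :
    ∑ X ∈ (insert a S).powerset, bernoulliWeight (insert a S) p X * f X =
      ∑ X ∈ S.powerset, bernoulliWeight S p X * ((1 - p a) * f X + p a * f (insert a X)) := by
  rw [sum_powerset_insert ha, ← sum_add_distrib]
  refine sum_congr rfl fun X hX => ?_
  have haX : a ∉ X := notMem_of_mem_powerset_of_notMem hX ha
  rw [bernoulliWeight_insert_of_notMem p ha haX, bernoulliWeight_insert_insert p ha haX]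
  ring

theorem sum_bernoulliWeight_mul_union (S : Finset α) (p p' : α → R) (f : Finset α → R) :
    ∑ X ∈ S.powerset, bernoulliWeight S p X *
        ∑ X' ∈ S.powerset, bernoulliWeight S p' X' * f (X ∪ X') =
      ∑ W ∈ S.powerset, bernoulliWeight S (fun a => p a + p' a - p a * p' a) W * f W := by
  induction S using Finset.induction_on generalizing f with
  | empty => simp [bernoulliWeight]
  | insert a S ha ih =>
    rw [sum_bernoulliWeight_insert_mul p ha, sum_bernoulliWeight_insert_mul _ ha, ← ih]
    refine sum_congr rfl fun X _ => ?_
    rw [sum_bernoulliWeight_insert_mul p' ha, sum_bernoulliWeight_insert_mul p' ha]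
    congr 1
    rw [mul_sum, mul_sum, ← sum_add_distrib]
    refine sum_congr rfl fun X' _ => ?_
    simp only [insert_union, union_insert, insert_idem]
    ring

end BernoulliWeight

/-- The simplicial complexes contained in `Δₙ`, the sample space of the upper measure. -/
def complexes (n : ℕ) : Finset (Finset (Finset (Fin (n + 1)))) :=
  (simplexAll n).powerset.filter fun Y => IsComplex Y

section UpperMeasure

variable {n : ℕ}

theorem clUp_subset_simplexAll (X : Finset (Finset (Fin (n + 1)))) : clUp X ⊆ simplexAll n :=
  monotone_filter_right _ fun _ _ hτ => hτ.1

theorem isComplex_clUp (X : Finset (Finset (Fin (n + 1)))) : IsComplex (clUp X) := by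
  intro σ hσ τ hτσ hτ
  obtain ⟨-, -, ρ, hρ, hσρ⟩ := mem_filter.1 hσ
  exact mem_filter.2 ⟨mem_univ τ, hτ, ρ, hρ, hτσ.trans hσρ⟩

theorem clUp_mem_complexes (X : Finset (Finset (Fin (n + 1)))) : clUp X ∈ complexes n :=
  mem_filter.2 ⟨mem_powerset.2 (clUp_subset_simplexAll X), isComplex_clUp X⟩

theorem clUp_union (X X' : Finset (Finset (Fin (n + 1)))) :
    clUp (X ∪ X') = clUp X ∪ clUp X' := by
  ext τ
  simp only [clUp, mem_filter_univ, mem_union, or_and_right, exists_or, and_or_left]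

theorem bern_eq_bernoulliWeight (S : Finset (Finset (Fin (n + 1))))
    (p : Finset (Fin (n + 1)) → ℝ) : bern S p = bernoulliWeight S p :=
  rfl

theorem sum_bern_mul_clUp_union (S : Finset (Finset (Fin (n + 1))))
    (p p' : Finset (Fin (n + 1)) → ℝ) (F : Finset (Finset (Fin (n + 1))) → ℝ) :
    ∑ X ∈ S.powerset, bern S p X * ∑ X' ∈ S.powerset, bern S p' X' * F (clUp X ∪ clUp X') =
      ∑ W ∈ S.powerset, bern S (fun σ => p σ + p' σ - p σ * p' σ) W * F (clUp W) := by
  simp only [bern_eq_bernoulliWeight, ← clUp_union]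
  exact sum_bernoulliWeight_mul_union S p p' fun W => F (clUp W)

theorem sum_upperP_mul (S : Finset (Finset (Fin (n + 1)))) (p : Finset (Fin (n + 1)) → ℝ)
    (F : Finset (Finset (Fin (n + 1))) → ℝ) :
    ∑ Y ∈ complexes n, upperP S p Y * F Y = ∑ X ∈ S.powerset, bern S p X * F (clUp X) := by
  rw [← sum_fiberwise_of_maps_to (s := S.powerset) fun X _ => clUp_mem_complexes X]
  refine sum_congr rfl fun Y _ => ?_
  rw [upperP, sum_mul]
  refine sum_congr rfl fun X hX => ?_
  rw [(mem_filter.1 hX).2]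

theorem union_upper_general (S : Finset (Finset (Fin (n + 1))))
    (p p' : Finset (Fin (n + 1)) → ℝ) (Z : Finset (Finset (Fin (n + 1)))) :
    ∑ Y ∈ complexes n, ∑ Y' ∈ complexes n with Y ∪ Y' = Z, upperP S p Y * upperP S p' Y' =
      upperP S (fun σ => p σ + p' σ - p σ * p' σ) Z := by
  let isZ (W : Finset (Finset (Fin (n + 1)))) : ℝ := if W = Z then 1 else 0
  calc
    _ = ∑ Y ∈ complexes n, upperP S p Y * ∑ Y' ∈ complexes n, upperP S p' Y' * isZ (Y ∪ Y') := by
      simp only [isZ, mul_ite, mul_one, mul_zero, ← sum_filter, mul_sum]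
    _ = ∑ X ∈ S.powerset, bern S p X *
          ∑ X' ∈ S.powerset, bern S p' X' * isZ (clUp X ∪ clUp X') := by
      simp only [sum_upperP_mul S p' fun Y' => isZ (_ ∪ Y'), sum_upperP_mul S p]
    _ = ∑ W ∈ S.powerset, bern S (fun σ => p σ + p' σ - p σ * p' σ) W * isZ (clUp W) :=
      sum_bern_mul_clUp_union S p p' isZ
    _ = upperP S (fun σ => p σ + p' σ - p σ * p' σ) Z := by
      simp only [isZ, mul_ite, mul_one, mul_zero, ← sum_filter, upperP]

end UpperMeasure

/-- The union of two independent upper random simplicial complexes with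
parameters `p` and `p'` is an upper random simplicial complex with parameters
`p_σ + p'_σ - p_σ·p'_σ`: the pushforward of the product measure under
`(Y,Y') ↦ Y ∪ Y'` is the upper measure with these parameters. -/
theorem union_upper (n : ℕ) (hn : 1 ≤ n) (p p' : Finset (Fin (n+1)) → ℝ)
    (hp : ∀ σ ∈ simplexAll n, 0 ≤ p σ ∧ p σ ≤ 1)
    (hp' : ∀ σ ∈ simplexAll n, 0 ≤ p' σ ∧ p' σ ≤ 1) :
    ∀ Z ∈ (simplexAll n).powerset.filter (fun Z => IsComplex Z),
      (∑ Y ∈ (simplexAll n).powerset.filter (fun Y => IsComplex Y),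
        ∑ Y' ∈ ((simplexAll n).powerset.filter
            (fun Y' => IsComplex Y')).filter (fun Y' => Y ∪ Y' = Z),
          upperP (simplexAll n) p Y * upperP (simplexAll n) p' Y')
      = upperP (simplexAll n) (fun σ => p σ + p' σ - p σ * p' σ) Z :=
  fun Z _ => union_upper_general (simplexAll n) p p' Z
end
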